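/- arXiv:1610.03675 — 6 statements merged into one kernel-verified Lean document; each statement's English description precedes it below -/
import Mathlib

section
/- If the bilinear form a is symmetric, then the solution operator T = ι ∘ S : H → H is self-adjoint, i.e. ⟨ι(S f), g⟩_H = ⟨f, ι(S g)⟩_H for all f, g ∈ H. -/
open scoped RealInnerProductSpace

section SourceProblem

open scoped InnerProductSpace ComplexConjugate

variable {𝕜 V H : Type*} [RCLike 𝕜] [SeminormedAddCommGroup H] [InnerProductSpace 𝕜 H]
  {ι : V → H} {a : V → V → 𝕜}

theorem inner_solution_eq_inner_adjoint_solution {f g : H} {u w : V}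
    (hu : ∀ v, a u v = ⟪f, ι v⟫_𝕜) (hw : ∀ v, a v w = ⟪ι v, g⟫_𝕜) :
    ⟪ι u, g⟫_𝕜 = ⟪f, ι w⟫_𝕜 :=
  (hw u).symm.trans (hu w)

theorem adjoint_solution_of_conj_symm (hsymm : ∀ u v, conj (a u v) = a v u) {g : H} {w : V}
    (hw : ∀ v, a w v = ⟪g, ι v⟫_𝕜) (v : V) : a v w = ⟪ι v, g⟫_𝕜 := by
  rw [← hsymm, hw, inner_conj_symm]

theorem stmt1_general (hsymm : ∀ u v, conj (a u v) = a v u)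
    {S : H → V} (hS : ∀ f v, a (S f) v = ⟪f, ι v⟫_𝕜) (f g : H) :
    ⟪ι (S f), g⟫_𝕜 = ⟪f, ι (S g)⟫_𝕜 :=
  inner_solution_eq_inner_adjoint_solution (hS f) (adjoint_solution_of_conj_symm hsymm (hS g))

end SourceProblem

/-- If the bilinear form `a` is symmetric, then the solution operator
`T = ι ∘ S : H → H` is self-adjoint: `⟪ι (S f), g⟫ = ⟪f, ι (S g)⟫` for all `f, g ∈ H`.
Here `S f ∈ V` is the (unique, by Lax–Milgram) solution of `a (S f) v = ⟪f, ι v⟫` for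
all `v ∈ V`. -/
theorem stmt1
    {V H : Type*}
    [NormedAddCommGroup V] [InnerProductSpace ℝ V] [CompleteSpace V]
    [NormedAddCommGroup H] [InnerProductSpace ℝ H] [CompleteSpace H]
    (ι : V →L[ℝ] H) (a : V →L[ℝ] V →L[ℝ] ℝ)
    (α : ℝ) (hα : 0 < α) (hcoer : ∀ v : V, α * ‖v‖ ^ 2 ≤ a v v)
    (hsymm : ∀ u v : V, a u v = a v u)
    (S : H → V) (hS : ∀ f : H, ∀ v : V, a (S f) v = ⟪f, ι v⟫) :
    ∀ f g : H, ⟪ι (S f), g⟫ = ⟪f, ι (S g)⟫ :=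
  stmt1_general (a := fun u v ↦ a u v) (fun u v ↦ (conj_trivial _).trans (hsymm u v)) hS
end

section
/- If the bilinear form a is symmetric and ι has dense range in H, then the solution operator T = ι ∘ S is positive definite: ⟨f, ι(S f)⟩_H > 0 for every f ∈ H with f ≠ 0. -/
open scoped RealInnerProductSpace

theorem apply_self_pos_of_isCoercive {V : Type*} [NormedAddCommGroup V] [NormedSpace ℝ V]
    {a : V →L[ℝ] V →L[ℝ] ℝ} (ha : IsCoercive a) {v : V} (hv : v ≠ 0) : 0 < a v v := by
  obtain ⟨C, hC, hbound⟩ := ha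
  have hnorm : 0 < ‖v‖ := norm_pos_iff.mpr hv
  exact (mul_pos (mul_pos hC hnorm) hnorm).trans_le (hbound v)

section Sesquilinear

variable {𝕜 V W H : Type*} [RCLike 𝕜] {σ : 𝕜 →+* 𝕜}
  [AddCommGroup V] [Module 𝕜 V] [AddCommGroup W] [Module 𝕜 W]
  [NormedAddCommGroup H] [InnerProductSpace 𝕜 H]

theorem ne_zero_of_apply_eq_inner_of_denseRange (a : V →ₛₗ[σ] W →ₗ[𝕜] 𝕜) {ι : W → H}
    (hdense : DenseRange ι) {u : V} {f : H} (hu : ∀ w, a u w = inner 𝕜 f (ι w)) (hf : f ≠ 0) :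
    u ≠ 0 := by
  rintro rfl
  have horth : ∀ w, inner 𝕜 f (ι w) = 0 := fun w => by
    rw [← hu w, map_zero, LinearMap.zero_apply]
  exact hf (hdense.eq_zero_of_inner_left 𝕜 horth)

-- Leaving `σ` free covers bilinear real forms and sesquilinear complex ones at once.
theorem stmt2_general (a : V →ₛₗ[σ] V →ₗ[𝕜] 𝕜) (hpos : ∀ v, v ≠ 0 → 0 < RCLike.re (a v v))
    {ι : V → H} (hdense : DenseRange ι) (S : H → V)
    (hS : ∀ f v, a (S f) v = inner 𝕜 f (ι v)) (f : H) (hf : f ≠ 0) :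
    0 < RCLike.re (inner 𝕜 f (ι (S f))) := by
  rw [← hS f (S f)]
  exact hpos (S f) (ne_zero_of_apply_eq_inner_of_denseRange a hdense (hS f) hf)

end Sesquilinear

/-- If the bilinear form `a` is symmetric and `ι` has dense range in `H`,
then the solution operator `T = ι ∘ S` is positive definite: `⟪f, ι (S f)⟫ > 0` for every
`f ∈ H` with `f ≠ 0`.  Here `S f ∈ V` is the (unique, by Lax–Milgram) solution of
`a (S f) v = ⟪f, ι v⟫` for all `v ∈ V`. -/
theorem stmt2
    {V H : Type*}
    [NormedAddCommGroup V] [InnerProductSpace ℝ V] [CompleteSpace V]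
    [NormedAddCommGroup H] [InnerProductSpace ℝ H] [CompleteSpace H]
    (ι : V →L[ℝ] H) (a : V →L[ℝ] V →L[ℝ] ℝ)
    (α : ℝ) (hα : 0 < α) (hcoer : ∀ v : V, α * ‖v‖ ^ 2 ≤ a v v)
    (hsymm : ∀ u v : V, a u v = a v u)
    (hdense : DenseRange ι)
    (S : H → V) (hS : ∀ f : H, ∀ v : V, a (S f) v = ⟪f, ι v⟫) :
    ∀ f : H, f ≠ 0 → 0 < ⟪f, ι (S f)⟫ := by
  have ha : IsCoercive a := ⟨α, hα, fun v => by simpa only [sq, mul_assoc] using hcoer v⟩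
  exact stmt2_general a.toLinearMap₁₂ (fun _ => apply_self_pos_of_isCoercive ha) hdense S hS
end

section
/- If ι : V → H is a compact operator, then the solution operator T = ι ∘ S : H → H is a compact operator. -/
open scoped RealInnerProductSpace

/-!
Coercivity bounds a vector `u` in terms of the functional `a u`. Hence `a` is injective, so the
solution map `S` inherits linearity from the right-hand side, and testing the equation for `S f`
with `S f` itself bounds `‖S f‖` by a multiple of `‖f‖`. Precomposing the compact `ι` with the
continuous linear map `S` gives a compact operator.
-/

theorem isLinearMap_of_injective_of_apply_eq {R V E W : Type*} [Semiring R]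
    [AddCommMonoid V] [Module R V] [AddCommMonoid E] [Module R E] [AddCommMonoid W] [Module R W]
    {σ : R →+* R} {A : V →ₛₗ[σ] W} (hA : Function.Injective A) {ℓ : E →ₛₗ[σ] W} {S : E → V}
    (hS : ∀ f, A (S f) = ℓ f) : IsLinearMap R S where
  map_add f g := hA <| by simp only [map_add, hS]
  map_smul c f := hA <| by simp only [map_smulₛₗ, hS]

section Coercive

variable {𝕜 V : Type*} [NormedField 𝕜] {σ : 𝕜 →+* 𝕜}
  [NormedAddCommGroup V] [NormedSpace 𝕜 V]
  {a : V →ₛₗ[σ] V →ₗ[𝕜] 𝕜} {α : ℝ}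

theorem norm_le_div_of_coercive (hα : 0 < α) (hcoer : ∀ v, α * ‖v‖ ^ 2 ≤ ‖a v v‖)
    {u : V} {C : ℝ} (hC : 0 ≤ C) (hu : ∀ v, ‖a u v‖ ≤ C * ‖v‖) : ‖u‖ ≤ C / α := by
  rcases (norm_nonneg u).eq_or_lt with hzero | hpos
  · rw [← hzero]
    positivity
  · have hmul : ‖u‖ * α * ‖u‖ ≤ C * ‖u‖ :=
      calc ‖u‖ * α * ‖u‖ = α * ‖u‖ ^ 2 := by ring
        _ ≤ C * ‖u‖ := (hcoer u).trans (hu u)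
    exact (le_div_iff₀ hα).mpr (le_of_mul_le_mul_right hmul hpos)

theorem injective_of_coercive (hα : 0 < α) (hcoer : ∀ v, α * ‖v‖ ^ 2 ≤ ‖a v v‖) :
    Function.Injective a := by
  refine (injective_iff_map_eq_zero a).mpr fun u hu => norm_le_zero_iff.mp ?_
  have hle : ‖u‖ ≤ 0 / α := norm_le_div_of_coercive hα hcoer le_rfl (by simp [hu])
  rwa [zero_div] at hle

/-- A general `σ` covers both bilinear forms (`σ = RingHom.id 𝕜`) and sesquilinear forms
(`σ = starRingEnd 𝕜`). -/
theorem stmt3_general {E F : Type*} [SeminormedAddCommGroup E] [NormedSpace 𝕜 E]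
    [TopologicalSpace F] {ι : V → F} (hι : IsCompactOperator ι)
    (hα : 0 < α) (hcoer : ∀ v, α * ‖v‖ ^ 2 ≤ ‖a v v‖)
    {ℓ : E →ₛₗ[σ] V →ₗ[𝕜] 𝕜} {C : NNReal} (hℓ : ∀ f v, ‖ℓ f v‖ ≤ C * ‖f‖ * ‖v‖)
    {S : E → V} (hS : ∀ f v, a (S f) v = ℓ f v) :
    IsCompactOperator (fun f : E => ι (S f)) := by
  have hlin : IsLinearMap 𝕜 S := isLinearMap_of_injective_of_apply_eq
    (injective_of_coercive hα hcoer) fun f => LinearMap.ext (hS f)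
  have hbound (f : E) : ‖S f‖ ≤ C / α * ‖f‖ :=
    calc ‖S f‖ ≤ C * ‖f‖ / α := norm_le_div_of_coercive hα hcoer (by positivity) fun v => by
          rw [hS]
          exact hℓ f v
      _ = C / α * ‖f‖ := by ring
  exact hι.comp_clm ((hlin.mk' S).mkContinuous (C / α) hbound)

end Coercive

theorem norm_inner_clm_apply_le {𝕜 V H : Type*} [RCLike 𝕜] [SeminormedAddCommGroup V]
    [NormedSpace 𝕜 V] [SeminormedAddCommGroup H] [InnerProductSpace 𝕜 H] (T : V →L[𝕜] H)
    (f : H) (v : V) : ‖inner 𝕜 f (T v)‖ ≤ ‖T‖ * ‖f‖ * ‖v‖ :=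
  calc ‖inner 𝕜 f (T v)‖ ≤ ‖f‖ * ‖T v‖ := norm_inner_le_norm f (T v)
    _ ≤ ‖f‖ * (‖T‖ * ‖v‖) := by gcongr; exact T.le_opNorm v
    _ = ‖T‖ * ‖f‖ * ‖v‖ := by ring

/-- If `ι : V → H` is a compact operator, then the solution operator
`T = ι ∘ S : H → H` is a compact operator.  Here `S f ∈ V` is the (unique, by
Lax–Milgram) solution of `a (S f) v = ⟪f, ι v⟫` for all `v ∈ V`. -/
theorem stmt3
    {V H : Type*}
    [NormedAddCommGroup V] [InnerProductSpace ℝ V] [CompleteSpace V]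
    [NormedAddCommGroup H] [InnerProductSpace ℝ H] [CompleteSpace H]
    (ι : V →L[ℝ] H) (a : V →L[ℝ] V →L[ℝ] ℝ)
    (α : ℝ) (hα : 0 < α) (hcoer : ∀ v : V, α * ‖v‖ ^ 2 ≤ a v v)
    (S : H → V) (hS : ∀ f : H, ∀ v : V, a (S f) v = ⟪f, ι v⟫)
    (hcompact : IsCompactOperator ι) :
    IsCompactOperator (fun f : H => ι (S f)) :=
  stmt3_general (a := a.toLinearMap₁₂) (ℓ := (innerₗ H).compl₂ ι.toLinearMap) (C := ‖ι‖₊)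
    hcompact hα (fun v => (hcoer v).trans (le_abs_self _)) (norm_inner_clm_apply_le ι) hS
end

section
/- Assume ι is injective. (a) If u ∈ V, u ≠ 0, and λ ∈ ℝ satisfy a(u, v) = λ ⟨ι u, ι v⟩_H for all v ∈ V, then λ ≥ α ‖u‖_V² / ‖ι u‖_H² > 0 and T(ι u) = λ⁻¹ (ι u). (b) Conversely, if w ∈ H, w ≠ 0, and μ ∈ ℝ, μ ≠ 0, satisfy T w = μ w, then u := S w is nonzero, w = μ⁻¹ ι u, and a(u, v) = μ⁻¹ ⟨ι u, ι v⟩_H for all v ∈ V. Thus the eigenvalues of the variational eigenvalue problem and of T are inverse of each other and the eigenspaces coincide. -/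
open scoped RealInnerProductSpace

/-!
A solution of the eigenvalue problem `a(u, v) = lam b(ι u, ι v)` is the same thing as a fixed point
`u = lam S (ι u)`: the solution operator turns the right-hand side `b(ι u, ι ·)` into `S (ι u)`, and
`a` separates the points of `V`. Testing the eigenvalue equation with `v = u`, coercivity gives
`α ‖u‖² ≤ lam ‖ι u‖²`, which forces both `ι u ≠ 0` and `lam > 0`.
-/

section BilinearForm

variable {R V H : Type*} [CommRing R] [AddCommGroup V] [Module R V] [AddCommGroup H] [Module R H]

/-- `S` is a solution operator `f ↦ S f` of the variational problem `a(S f, v) = b(f, ι v)`, the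
abstract form of the boundary value problem with datum `f`. It is a bare function: its linearity
is a consequence when `a` separates points. -/
def IsSolutionOperator (a : V →ₗ[R] V →ₗ[R] R) (b : H →ₗ[R] H →ₗ[R] R) (ι : V →ₗ[R] H)
    (S : H → V) : Prop :=
  ∀ f v, a (S f) v = b f (ι v)

/-- `u` solves the variational eigenvalue problem `a(u, v) = lam b(ι u, ι v)`. The vector `u = 0` is
allowed, so that the solutions for a fixed `lam` are the whole eigenspace. -/
def IsEigensolution (a : V →ₗ[R] V →ₗ[R] R) (b : H →ₗ[R] H →ₗ[R] R) (ι : V →ₗ[R] H)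
    (lam : R) (u : V) : Prop :=
  ∀ v, a u v = lam * b (ι u) (ι v)

variable {a : V →ₗ[R] V →ₗ[R] R} {b : H →ₗ[R] H →ₗ[R] R} {ι : V →ₗ[R] H} {S : H → V}

theorem IsSolutionOperator.smul_apply_eq_of_isEigensolution (hS : IsSolutionOperator a b ι S)
    (ha : a.SeparatingLeft) {lam : R} {u : V} (hu : IsEigensolution a b ι lam u) :
    lam • S (ι u) = u := by
  refine sub_eq_zero.mp (ha _ fun v ↦ ?_)
  rw [map_sub, map_smul, LinearMap.sub_apply, LinearMap.smul_apply, smul_eq_mul, hS, hu v,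
    sub_self]

theorem IsSolutionOperator.isEigensolution_apply (hS : IsSolutionOperator a b ι S)
    {lam : R} {w : H} (hw : lam • ι (S w) = w) : IsEigensolution a b ι lam (S w) := fun v ↦
  calc
    a (S w) v = b w (ι v) := hS w v
    _ = b (lam • ι (S w)) (ι v) := by rw [hw]
    _ = lam * b (ι (S w)) (ι v) := by rw [map_smul, LinearMap.smul_apply, smul_eq_mul]

end BilinearForm

section Coercive

variable {V H : Type*} [NormedAddCommGroup V] [NormedSpace ℝ V]
  [SeminormedAddCommGroup H] [InnerProductSpace ℝ H]
  {a : V →ₗ[ℝ] V →ₗ[ℝ] ℝ} {ι : V →ₗ[ℝ] H} {α lam : ℝ} {u : V}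

theorem separatingLeft_of_coercive (hα : 0 < α) (hcoer : ∀ v, α * ‖v‖ ^ 2 ≤ a v v) :
    a.SeparatingLeft := by
  intro v hv
  by_contra hne
  have hpos : 0 < α * ‖v‖ ^ 2 := by positivity
  exact (hpos.trans_le (hcoer v)).ne' (hv v)

theorem IsEigensolution.mul_norm_sq_le (hcoer : ∀ v, α * ‖v‖ ^ 2 ≤ a v v)
    (hu : IsEigensolution a (innerₗ H) ι lam u) : α * ‖u‖ ^ 2 ≤ lam * ‖ι u‖ ^ 2 :=
  calc
    α * ‖u‖ ^ 2 ≤ a u u := hcoer u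
    _ = lam * ⟪ι u, ι u⟫ := hu u
    _ = lam * ‖ι u‖ ^ 2 := by rw [real_inner_self_eq_norm_sq]

theorem IsEigensolution.norm_map_pos (hα : 0 < α) (hcoer : ∀ v, α * ‖v‖ ^ 2 ≤ a v v)
    (hu : IsEigensolution a (innerₗ H) ι lam u) (hu₀ : u ≠ 0) : 0 < ‖ι u‖ := by
  refine (norm_nonneg _).lt_of_ne' fun hιu ↦ ?_
  have hpos : 0 < α * ‖u‖ ^ 2 := by positivity
  have hle : α * ‖u‖ ^ 2 ≤ 0 := by simpa [hιu] using hu.mul_norm_sq_le hcoer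
  exact hle.not_gt hpos

end Coercive

theorem stmt4_general
    {V H : Type*} [NormedAddCommGroup V] [NormedSpace ℝ V]
    [SeminormedAddCommGroup H] [InnerProductSpace ℝ H]
    (ι : V →ₗ[ℝ] H) (a : V →ₗ[ℝ] V →ₗ[ℝ] ℝ)
    (α : ℝ) (hα : 0 < α) (hcoer : ∀ v : V, α * ‖v‖ ^ 2 ≤ a v v)
    (S : H → V) (hS : ∀ f : H, ∀ v : V, a (S f) v = ⟪f, ι v⟫) :
    (∀ u : V, u ≠ 0 → ∀ lam : ℝ,
      (∀ v : V, a u v = lam * ⟪ι u, ι v⟫) →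
        0 < α * ‖u‖ ^ 2 / ‖ι u‖ ^ 2 ∧
        α * ‖u‖ ^ 2 / ‖ι u‖ ^ 2 ≤ lam ∧
        ι (S (ι u)) = lam⁻¹ • ι u) ∧
    (∀ w : H, w ≠ 0 → ∀ mu : ℝ, mu ≠ 0 →
      ι (S w) = mu • w →
        S w ≠ 0 ∧
        w = mu⁻¹ • ι (S w) ∧
        ∀ v : V, a (S w) v = mu⁻¹ * ⟪ι (S w), ι v⟫) := by
  have hsol : IsSolutionOperator a (innerₗ H) ι S := hS
  constructor
  · intro u hu₀ lam h
    have hu : IsEigensolution a (innerₗ H) ι lam u := h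
    have hιu : 0 < ‖ι u‖ := hu.norm_map_pos hα hcoer hu₀
    have hpos : 0 < α * ‖u‖ ^ 2 / ‖ι u‖ ^ 2 := by positivity
    have hle : α * ‖u‖ ^ 2 / ‖ι u‖ ^ 2 ≤ lam :=
      (div_le_iff₀ (by positivity)).mpr (hu.mul_norm_sq_le hcoer)
    have hfix : lam • S (ι u) = u :=
      hsol.smul_apply_eq_of_isEigensolution (separatingLeft_of_coercive hα hcoer) hu
    refine ⟨hpos, hle, (eq_inv_smul_iff₀ (hpos.trans_le hle).ne').mpr ?_⟩
    rw [← map_smul, hfix]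
  · intro w hw₀ mu hmu h
    have hw : w = mu⁻¹ • ι (S w) := (eq_inv_smul_iff₀ hmu).mpr h.symm
    have hSw : S w ≠ 0 := fun h₀ ↦ hw₀ (by rw [hw, h₀, map_zero, smul_zero])
    exact ⟨hSw, hw, hsol.isEigensolution_apply hw.symm⟩

/-- Assume `ι` is injective.  (a) If `u ≠ 0` and `λ` satisfy
`a u v = λ ⟪ι u, ι v⟫` for all `v`, then `λ ≥ α ‖u‖² / ‖ι u‖² > 0` and
`T (ι u) = λ⁻¹ (ι u)` where `T = ι ∘ S`.  (b) Conversely, if `w ≠ 0` and `μ ≠ 0`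
satisfy `T w = μ w`, then `u := S w` is nonzero, `w = μ⁻¹ ι u`, and
`a u v = μ⁻¹ ⟪ι u, ι v⟫` for all `v`.  Here `S f ∈ V` is the (unique, by
Lax–Milgram) solution of `a (S f) v = ⟪f, ι v⟫` for all `v ∈ V`. -/
theorem stmt4
    {V H : Type*}
    [NormedAddCommGroup V] [InnerProductSpace ℝ V] [CompleteSpace V]
    [NormedAddCommGroup H] [InnerProductSpace ℝ H] [CompleteSpace H]
    (ι : V →L[ℝ] H) (a : V →L[ℝ] V →L[ℝ] ℝ)
    (α : ℝ) (hα : 0 < α) (hcoer : ∀ v : V, α * ‖v‖ ^ 2 ≤ a v v)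
    (hinj : Function.Injective ι)
    (S : H → V) (hS : ∀ f : H, ∀ v : V, a (S f) v = ⟪f, ι v⟫) :
    (∀ u : V, u ≠ 0 → ∀ lam : ℝ,
      (∀ v : V, a u v = lam * ⟪ι u, ι v⟫) →
        0 < α * ‖u‖ ^ 2 / ‖ι u‖ ^ 2 ∧
        α * ‖u‖ ^ 2 / ‖ι u‖ ^ 2 ≤ lam ∧
        ι (S (ι u)) = lam⁻¹ • ι u) ∧
    (∀ w : H, w ≠ 0 → ∀ mu : ℝ, mu ≠ 0 →
      ι (S w) = mu • w →
        S w ≠ 0 ∧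
        w = mu⁻¹ • ι (S w) ∧
        ∀ v : V, a (S w) v = mu⁻¹ * ⟪ι (S w), ι v⟫) :=
  stmt4_general ι.toLinearMap a.toLinearMap₁₂ α hα hcoer S hS
end

section
/- Let A and B be bounded self-adjoint operators on a nontrivial complex Hilbert space H. Then every point of the (real) spectrum of B lies within distance ‖A − B‖ of the (real) spectrum of A, i.e. spectrum(B) ⊆ { x ∈ ℝ : dist(x, spectrum(A)) ≤ ‖A − B‖ }. -/
/-!
The functional calculus gives the resolvent bound `‖(z - a)⁻¹‖ ≤ 1 / dist(z, σ(a))`. If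
`‖a - b‖ < dist(z, σ(a))`, then `z - b = (z - a) (1 - (z - a)⁻¹ (b - a))` is invertible, because the
second factor is a perturbation of `1` of norm less than `1`.
-/

section Perturbation

variable {R A : Type*} [CommSemiring R] [NormedRing A] [HasSummableGeomSeries A] [Algebra R A]

theorem mem_resolventSet_of_norm_resolvent_mul_norm_sub_lt_one {a b : A} {z : R}
    (hz : z ∈ resolventSet R a) (h : ‖resolvent a z‖ * ‖b - a‖ < 1) :
    z ∈ resolventSet R b := by
  have hinv : (algebraMap R A z - a) * resolvent a z = 1 := Ring.mul_inverse_cancel _ hz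
  have hfactor : algebraMap R A z - b =
      (algebraMap R A z - a) * (1 - resolvent a z * (b - a)) := by
    rw [mul_sub, mul_one, ← mul_assoc, hinv, one_mul, sub_sub_sub_cancel_right]
  rw [spectrum.mem_resolventSet_iff, hfactor]
  exact hz.mul (isUnit_one_sub_of_norm_lt_one ((norm_mul_le _ _).trans_lt h))

end Perturbation

section FunctionalCalculus

variable {R A : Type*} {p : A → Prop} [Field R] [StarRing R] [MetricSpace R] [IsTopologicalRing R]
  [ContinuousStar R] [ContinuousInv₀ R] [TopologicalSpace A] [Ring A] [StarRing A] [Algebra R A]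
  [ContinuousFunctionalCalculus R A p]

theorem resolvent_eq_cfc {a : A} {z : R} (ha : p a) (hz : z ∈ resolventSet R a) :
    resolvent a z = cfc (fun x ↦ (z - x)⁻¹) a := by
  have hne : ∀ x ∈ spectrum R a, z - x ≠ 0 := fun x hx h ↦ hx (sub_eq_zero.mp h ▸ hz)
  rw [cfc_inv (fun x ↦ z - x) a hne, cfc_sub (fun _ ↦ z) (fun x ↦ x) a, cfc_const z a,
    cfc_id' R a, resolvent]

end FunctionalCalculus

section IsometricFunctionalCalculus

variable {𝕜 A : Type*} {p : A → Prop} [RCLike 𝕜] [NormedRing A] [StarRing A] [NormedAlgebra 𝕜 A]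
  [IsometricContinuousFunctionalCalculus 𝕜 A p]

open Metric

theorem norm_resolvent_le_inv_infDist_spectrum {a : A} {z : 𝕜} (ha : p a)
    (hz : z ∈ resolventSet 𝕜 a) : ‖resolvent a z‖ ≤ (infDist z (spectrum 𝕜 a))⁻¹ := by
  rw [resolvent_eq_cfc ha hz]
  refine norm_cfc_le (inv_nonneg.mpr infDist_nonneg) fun x hx ↦ ?_
  have hclosed : IsClosed (spectrum 𝕜 a) :=
    (ContinuousFunctionalCalculus.isCompact_spectrum a).isClosed
  have hpos : 0 < infDist z (spectrum 𝕜 a) :=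
    (hclosed.notMem_iff_infDist_pos ⟨x, hx⟩).mp fun hmem ↦ hmem hz
  rw [norm_inv, ← dist_eq_norm]
  exact inv_anti₀ hpos (infDist_le_dist_of_mem hx)

theorem stmt7_general [HasSummableGeomSeries A] (a b : A) (ha : p a) :
    spectrum 𝕜 b ⊆ {z : 𝕜 | infDist z (spectrum 𝕜 a) ≤ ‖a - b‖} := by
  intro z hzb
  rw [Set.mem_ofPred_eq]
  by_contra! hlt
  have hpos : 0 < infDist z (spectrum 𝕜 a) := (norm_nonneg _).trans_lt hlt
  have hza : z ∈ resolventSet 𝕜 a := by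
    by_contra hmem
    exact hpos.ne' (infDist_zero_of_mem hmem)
  refine hzb (mem_resolventSet_of_norm_resolvent_mul_norm_sub_lt_one hza ?_)
  calc ‖resolvent a z‖ * ‖b - a‖
      ≤ (infDist z (spectrum 𝕜 a))⁻¹ * ‖a - b‖ := by
        rw [norm_sub_rev b a]
        gcongr
        exact norm_resolvent_le_inv_infDist_spectrum ha hza
    _ < 1 := (inv_mul_lt_one₀ hpos).mpr hlt

end IsometricFunctionalCalculus

/-- Let `A` and `B` be bounded self-adjoint operators on a nontrivial
complex Hilbert space `H`.  Then every point of the spectrum of `B` (which is real,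
`B` being self-adjoint) lies within distance `‖A − B‖` of the spectrum of `A`. -/
theorem stmt7
    {H : Type*} [NormedAddCommGroup H] [InnerProductSpace ℂ H] [CompleteSpace H]
    [Nontrivial H]
    (A B : H →L[ℂ] H) (hA : IsSelfAdjoint A) (hB : IsSelfAdjoint B) :
    spectrum ℂ B ⊆ {z : ℂ | Metric.infDist z (spectrum ℂ A) ≤ ‖A - B‖} :=
  stmt7_general A B hA.isStarNormal
end

section
/- Let T and (T_n)_{n∈ℕ} be compact self-adjoint operators on a complex Hilbert space H with ‖T_n − T‖ → 0. Let μ ∈ ℝ, μ ≠ 0, be an eigenvalue of T whose eigenspace ker(T − μI) has finite dimension m ≥ 1, and let ε ∈ (0, |μ|/2) be such that spectrum(T) ∩ [μ − 2ε, μ + 2ε] = {μ}. Then there exists N such that for all n ≥ N the sum of the eigenspaces of T_n corresponding to eigenvalues ν with |ν − μ| ≤ ε has dimension exactly m; that is, exactly m discrete eigenvalues of T_n, counted with multiplicity, converge to μ. -/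
open Filter

/-!
Let `S` be self-adjoint with `‖S - T‖ < ε`. Points `t` with `|t - μ| = ε` have distance at least
`ε` from the spectrum of `T`, so they lie in neither spectrum. Hence the indicator of
`[μ - ε, μ + ε]` is continuous on both spectra, and the continuous functional calculus gives
spectral projections `P` of `T` and `Q` of `S`. On the range of `Q` we have
`‖(S - μ) x‖ ≤ ε ‖x‖`, while `‖(T - μ) x‖ ≥ 2ε ‖x‖` on the kernel of `P`; as `‖S - T‖ < ε`,
these subspaces meet only in `0`, so `P` is injective on the range of `Q`. The constants `0` and
`ε` in the same way make `Q` injective on the range of `P`, which is `ker (T - μ)`. So the two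
ranges have the same finite dimension, and the range of `Q`, being invariant under `S`, is spanned
by eigenvectors of `S`.
-/

open Metric Module Module.End

theorem continuousOn_indicator_one {X : Type*} [TopologicalSpace X] {s u : Set X}
    (hs : Disjoint (frontier s) u) : ContinuousOn (s.indicator (1 : X → ℝ)) u := fun _ ht ↦
  (continuousOn_const.continuousAt_indicator
    (hs.notMem_of_mem_right ht)).continuousWithinAt

theorem notMem_spectrum_of_norm_sub_lt {𝓐 : Type*} [CStarAlgebra 𝓐] {a b : 𝓐}
    (ha : IsSelfAdjoint a) {t r : ℝ} (hr : ∀ s ∈ spectrum ℝ a, r ≤ |s - t|)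
    (hab : ‖a - b‖ < r) : t ∉ spectrum ℝ b := by
  have hr_pos : 0 < r := (norm_nonneg _).trans_lt hab
  have hne : ∀ s ∈ spectrum ℝ a, t - s ≠ 0 := fun s hs ↦
    abs_pos.1 (hr_pos.trans_le (abs_sub_comm s t ▸ hr s hs))
  have hcont : ContinuousOn (fun s : ℝ ↦ (t - s)⁻¹) (spectrum ℝ a) :=
    ContinuousOn.inv₀ (by fun_prop) hne
  set R : 𝓐 := cfc (fun s : ℝ ↦ (t - s)⁻¹) a
  have hR_norm : ‖R‖ ≤ r⁻¹ := norm_cfc_le (by positivity) fun s hs ↦ by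
    rw [norm_inv, Real.norm_eq_abs, abs_sub_comm]
    exact inv_anti₀ hr_pos (hr s hs)
  have hR_mul : (algebraMap ℝ 𝓐 t - a) * R = 1 := by
    have hsub : algebraMap ℝ 𝓐 t - a = cfc (fun s : ℝ ↦ t - s) a := by
      rw [cfc_sub .., cfc_const .., cfc_id' ..]
    rw [hsub, ← cfc_mul .., ← cfc_one ℝ a]
    exact cfc_congr fun s hs ↦ mul_inv_cancel₀ (hne s hs)
  have hsmall : ‖R * (b - a)‖ < 1 := calc
    ‖R * (b - a)‖ ≤ r⁻¹ * ‖a - b‖ := by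
      rw [norm_sub_rev a b]; exact norm_mul_le_of_le hR_norm le_rfl
    _ < r⁻¹ * r := by gcongr
    _ = 1 := inv_mul_cancel₀ hr_pos.ne'
  have hfactor : algebraMap ℝ 𝓐 t - b = (algebraMap ℝ 𝓐 t - a) * (1 - R * (b - a)) := by
    rw [mul_sub, ← mul_assoc, hR_mul]
    noncomm_ring
  have ht : t ∉ spectrum ℝ a := fun ht ↦ hne t ht (sub_self t)
  rw [spectrum.notMem_iff, hfactor]
  exact (spectrum.notMem_iff.1 ht).mul (isUnit_one_sub_of_norm_lt_one hsmall)

theorem disjoint_frontier_closedBall_spectrum {𝓐 : Type*} [CStarAlgebra 𝓐] {a b : 𝓐} {μ ε : ℝ}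
    (ha : IsSelfAdjoint a) (hgap : spectrum ℝ a ∩ ball μ (2 * ε) ⊆ {μ}) (hab : ‖a - b‖ < ε) :
    Disjoint (frontier (closedBall μ ε)) (spectrum ℝ b) := by
  have hε : 0 < ε := (norm_nonneg _).trans_lt hab
  rw [frontier_closedBall μ hε.ne', Set.disjoint_left]
  refine fun t (ht : dist t μ = ε) ↦ notMem_spectrum_of_norm_sub_lt ha (fun s hs ↦ ?_) hab
  rw [← Real.dist_eq]
  by_cases hsμ : dist s μ < 2 * ε
  · rw [show s = μ from hgap ⟨hs, hsμ⟩, dist_comm, ht]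
  · linarith [dist_triangle s t μ]

universe u in
theorem rank_le_rank_range_of_norm_sub_lt {𝕜 F : Type*} {E G : Type u} [NontriviallyNormedField 𝕜]
    [NormedAddCommGroup E] [NormedSpace 𝕜 E] [SeminormedAddCommGroup F] [NormedSpace 𝕜 F]
    [AddCommGroup G] [Module 𝕜 G]
    {A B : E →L[𝕜] F} {V : Submodule 𝕜 E} {P : E →ₗ[𝕜] G} {a b : ℝ}
    (hA : ∀ x ∈ V, ‖A x‖ ≤ a * ‖x‖) (hB : ∀ x, P x = 0 → b * ‖x‖ ≤ ‖B x‖)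
    (hab : ‖A - B‖ < b - a) : Module.rank 𝕜 V ≤ Module.rank 𝕜 P.range := by
  refine LinearMap.rank_le_of_injective (P.rangeRestrict ∘ₗ V.subtype)
    ((injective_iff_map_eq_zero _).2 fun x hx ↦ ?_)
  have hPx : P x = 0 := congrArg Subtype.val hx
  have hlower : (b - a) * ‖(x : E)‖ ≤ ‖A - B‖ * ‖(x : E)‖ := calc
    (b - a) * ‖(x : E)‖ ≤ ‖B x‖ - ‖A x‖ := by linarith [hA x x.2, hB x hPx]
    _ ≤ ‖(A - B) x‖ := by
      rw [sub_apply, norm_sub_rev]; exact norm_sub_norm_le _ _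
    _ ≤ ‖A - B‖ * ‖(x : E)‖ := (A - B).le_opNorm x
  by_contra hne
  exact hlower.not_gt (mul_lt_mul_of_pos_right hab (norm_pos_iff.2 (by simpa using hne)))

theorem mem_spectrum_of_hasEigenvalue {𝕜 E : Type*} [NormedField 𝕜] [SeminormedAddCommGroup E]
    [NormedSpace 𝕜 E] {A : E →L[𝕜] E} {z : 𝕜} (h : HasEigenvalue (A : E →ₗ[𝕜] E) z) :
    z ∈ spectrum 𝕜 A := fun hunit ↦
  h.mem_spectrum (hunit.map ContinuousLinearMap.toLinearMapRingHom)

theorem eq_iSup_inf_eigenspace_of_isSymmetric {𝕜 E : Type*} [RCLike 𝕜] [NormedAddCommGroup E]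
    [InnerProductSpace 𝕜 E] {T : E →ₗ[𝕜] E} (hT : T.IsSymmetric) {V : Submodule 𝕜 E}
    [FiniteDimensional 𝕜 V] (hV : ∀ v ∈ V, T v ∈ V) : V = ⨆ z : 𝕜, V ⊓ eigenspace T z := by
  refine le_antisymm ?_ (iSup_le fun _ ↦ inf_le_left)
  have htop : ⨆ z, eigenspace (T.restrict hV) z = ⊤ := Submodule.orthogonal_eq_bot_iff.1
    (hT.restrict_invariant hV).orthogonalComplement_iSup_eigenspaces_eq_bot
  calc
    V = (⨆ z, eigenspace (T.restrict hV) z).map V.subtype := by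
      rw [htop, Submodule.map_subtype_top]
    _ = ⨆ z, (eigenspace (T.restrict hV) z).map V.subtype := Submodule.map_iSup ..
    _ ≤ ⨆ z, V ⊓ eigenspace T z := iSup_mono fun z ↦
      le_inf (Submodule.map_subtype_le ..) (eigenspace_restrict_le_eigenspace T hV z)

section SpectralProjection

variable {H : Type*} [NormedAddCommGroup H] [InnerProductSpace ℂ H] [CompleteSpace H]
  {A B : H →L[ℂ] H} {s t : Set ℝ} {ν r : ℝ}

theorem norm_cfc_apply_le {f g : ℝ → ℝ} (hf : ContinuousOn f (spectrum ℝ A))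
    (hg : ContinuousOn g (spectrum ℝ A)) (hfg : ∀ t ∈ spectrum ℝ A, |f t| ≤ |g t|) (x : H) :
    ‖cfc f A x‖ ≤ ‖cfc g A x‖ := by
  have inner_sq (h : ℝ → ℝ) (hh : ContinuousOn h (spectrum ℝ A)) :
      inner ℂ (cfc (fun t ↦ h t * h t) A x) x = (‖cfc h A x‖ : ℂ) ^ 2 := by
    rw [cfc_mul .., ← RCLike.ofReal_eq_complex_ofReal, ← inner_self_eq_norm_sq_to_K]
    exact (cfc_predicate h A : IsSelfAdjoint (cfc h A)).isSymmetric _ x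
  have hle : cfc (fun t ↦ f t * f t) A ≤ cfc (fun t ↦ g t * g t) A :=
    cfc_mono fun t ht ↦ abs_le_iff_mul_self_le.1 (hfg t ht)
  have hnonneg := ((ContinuousLinearMap.le_def ..).1 hle).re_inner_nonneg_left x
  rw [sub_apply, inner_sub_left, inner_sq f hf, inner_sq g hg] at hnonneg
  norm_cast at hnonneg
  exact le_of_sq_le_sq (sub_nonneg.1 hnonneg) (norm_nonneg _)

theorem cfc_sub_const_apply (hA : IsSelfAdjoint A) (ν : ℝ) (x : H) :
    cfc (fun t ↦ t - ν) A x = A x - (ν : ℂ) • x := by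
  rw [cfc_sub .., cfc_const .., cfc_id' .., Algebra.algebraMap_eq_smul_one]
  simp

/-- The spectral projection `1_s(A)` of a self-adjoint operator `A`, by the continuous functional
calculus. It is meaningful only if the indicator of `s` is continuous on the spectrum of `A`, for
instance if the spectrum avoids the frontier of `s`; otherwise `cfc` returns the junk value `0`. -/
noncomputable def spectralProjection (A : H →L[ℂ] H) (s : Set ℝ) : H →L[ℂ] H :=
  cfc (s.indicator (1 : ℝ → ℝ)) A

theorem spectralProjection_compl (hA : IsSelfAdjoint A)
    (hs : Disjoint (frontier s) (spectrum ℝ A)) :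
    spectralProjection A sᶜ = 1 - spectralProjection A s := by
  have hcont := continuousOn_indicator_one hs
  rw [spectralProjection, Set.indicator_compl, ← cfc_one ℝ A]
  exact cfc_sub ..

theorem isIdempotentElem_spectralProjection (hs : Disjoint (frontier s) (spectrum ℝ A)) :
    IsIdempotentElem (spectralProjection A s) := by
  have hcont := continuousOn_indicator_one hs
  rw [IsIdempotentElem, spectralProjection, ← cfc_mul ..]
  congr 1
  ext t
  by_cases ht : t ∈ s <;> simp [ht]

theorem mem_range_spectralProjection_iff (hs : Disjoint (frontier s) (spectrum ℝ A)) {x : H} :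
    x ∈ (spectralProjection A s).range ↔ spectralProjection A s x = x :=
  LinearMap.IsIdempotentElem.mem_range_iff
    (ContinuousLinearMap.IsIdempotentElem.toLinearMap (isIdempotentElem_spectralProjection hs))

theorem map_mem_range_spectralProjection {x : H}
    (hx : x ∈ (spectralProjection A s).range) : A x ∈ (spectralProjection A s).range := by
  obtain ⟨y, rfl⟩ := hx
  have hcomm : Commute (spectralProjection A s) A := (Commute.refl A).cfc_real _
  exact ⟨A y, DFunLike.congr_fun hcomm.eq y⟩

theorem norm_apply_sub_smul_spectralProjection_le (hA : IsSelfAdjoint A)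
    (hs : Disjoint (frontier s) (spectrum ℝ A)) (hr : 0 ≤ r)
    (h : s ∩ spectrum ℝ A ⊆ closedBall ν r) (x : H) :
    ‖A (spectralProjection A s x) - (ν : ℂ) • spectralProjection A s x‖ ≤
      r * ‖spectralProjection A s x‖ := by
  have hcont := continuousOn_indicator_one hs
  have hle := norm_cfc_apply_le (f := fun t ↦ (t - ν) * s.indicator 1 t)
    (g := fun t ↦ r * s.indicator 1 t) (by fun_prop) (by fun_prop) (fun t ht ↦ ?_) x
  · rwa [cfc_mul .., cfc_const_mul .., mul_apply_eq_comp, cfc_sub_const_apply hA, smul_apply,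
      norm_smul, Real.norm_of_nonneg hr] at hle
  · by_cases hts : t ∈ s
    · simpa [hts, abs_of_nonneg hr, Real.dist_eq] using h ⟨hts, ht⟩
    · simp [hts]

theorem mul_norm_spectralProjection_apply_le (hA : IsSelfAdjoint A)
    (hs : Disjoint (frontier s) (spectrum ℝ A)) (hr : 0 ≤ r)
    (h : Disjoint (s ∩ spectrum ℝ A) (ball ν r)) (x : H) :
    r * ‖spectralProjection A s x‖ ≤ ‖A x - (ν : ℂ) • x‖ := by
  have hcont := continuousOn_indicator_one hs
  have hle := norm_cfc_apply_le (f := fun t ↦ r * s.indicator 1 t) (g := fun t ↦ t - ν)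
    (by fun_prop) (by fun_prop) (fun t ht ↦ ?_) x
  · rwa [cfc_const_mul .., cfc_sub_const_apply hA, smul_apply, norm_smul,
      Real.norm_of_nonneg hr] at hle
  · by_cases hts : t ∈ s
    · simpa [hts, abs_of_nonneg hr, Real.dist_eq] using h.notMem_of_mem_left ⟨hts, ht⟩
    · simp [hts]

theorem spectralProjection_apply_of_mem_eigenspace_of_notMem (hA : IsSelfAdjoint A)
    (hs : Disjoint (frontier s) (spectrum ℝ A)) (hν : ν ∉ s) {x : H}
    (hx : x ∈ eigenspace (A : H →ₗ[ℂ] H) (ν : ℂ)) : spectralProjection A s x = 0 := by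
  rcases eq_or_ne x 0 with rfl | hx_ne
  · exact map_zero _
  have hν_spec : ν ∈ spectrum ℝ A := (spectrum.algebraMap_mem_iff ℂ).1 <|
    mem_spectrum_of_hasEigenvalue (hasEigenvalue_of_hasEigenvector ⟨hx, hx_ne⟩)
  have hν_int : ν ∈ interior sᶜ := by
    by_contra hν_int
    exact hs.notMem_of_mem_right hν_spec
      ⟨by rwa [interior_compl, Set.notMem_compl_iff] at hν_int, fun h ↦ hν (interior_subset h)⟩
  obtain ⟨r, hr, hball⟩ := Metric.mem_nhds_iff.1 (mem_interior_iff_mem_nhds.1 hν_int)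
  have hdisj : Disjoint (s ∩ spectrum ℝ A) (ball ν r) :=
    (Set.disjoint_right.2 hball).mono_left Set.inter_subset_left
  have hle := mul_norm_spectralProjection_apply_le hA hs hr.le hdisj x
  have hAx : A x = (ν : ℂ) • x := mem_eigenspace_iff.1 hx
  rw [hAx, sub_self, norm_zero] at hle
  exact norm_le_zero_iff.1 (nonpos_of_mul_nonpos_right hle hr)

theorem eigenspace_le_range_spectralProjection (hA : IsSelfAdjoint A)
    (hs : Disjoint (frontier s) (spectrum ℝ A)) (hν : ν ∈ s) :
    eigenspace (A : H →ₗ[ℂ] H) (ν : ℂ) ≤ (spectralProjection A s).range := fun x hx ↦ by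
  have hcompl := spectralProjection_apply_of_mem_eigenspace_of_notMem hA
    (s := sᶜ) (by rwa [frontier_compl]) (Set.notMem_compl_iff.2 hν) hx
  rw [spectralProjection_compl hA hs, sub_apply, one_apply_eq_self, sub_eq_zero] at hcompl
  exact ⟨x, hcompl.symm⟩

theorem range_spectralProjection_eq_eigenspace (hA : IsSelfAdjoint A)
    (hs : Disjoint (frontier s) (spectrum ℝ A)) (hν : ν ∈ s) (h : s ∩ spectrum ℝ A ⊆ {ν}) :
    (spectralProjection A s).range = eigenspace (A : H →ₗ[ℂ] H) (ν : ℂ) := by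
  refine le_antisymm ?_ (eigenspace_le_range_spectralProjection hA hs hν)
  rintro _ ⟨x, rfl⟩
  have hle := norm_apply_sub_smul_spectralProjection_le hA hs le_rfl (by simpa using h) x
  rw [zero_mul, norm_le_zero_iff, sub_eq_zero] at hle
  exact mem_eigenspace_iff.2 hle

theorem range_spectralProjection_eq_iSup_eigenspace (hA : IsSelfAdjoint A)
    (hs : Disjoint (frontier s) (spectrum ℝ A))
    [FiniteDimensional ℂ (spectralProjection A s).range] :
    (spectralProjection A s).range = ⨆ ν ∈ s, eigenspace (A : H →ₗ[ℂ] H) ((ν : ℝ) : ℂ) := by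
  refine le_antisymm ?_ (iSup₂_le fun ν ↦ eigenspace_le_range_spectralProjection hA hs)
  rw [eq_iSup_inf_eigenspace_of_isSymmetric hA.isSymmetric fun _ ↦
    map_mem_range_spectralProjection]
  refine iSup_le fun z x ⟨hx_range, hx_eigen⟩ ↦ ?_
  rcases eq_or_ne x 0 with rfl | hx_ne
  · exact zero_mem _
  obtain ⟨ν, rfl⟩ : ∃ ν : ℝ, z = ν := Complex.conj_eq_iff_real.1 <|
    hA.isSymmetric.conj_eigenvalue_eq_self (hasEigenvalue_of_hasEigenvector ⟨hx_eigen, hx_ne⟩)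
  have hν : ν ∈ s := by
    by_contra hν
    have hfix := (mem_range_spectralProjection_iff hs).1 hx_range
    rw [spectralProjection_apply_of_mem_eigenspace_of_notMem hA hs hν hx_eigen] at hfix
    exact hx_ne hfix.symm
  exact Submodule.mem_iSup_of_mem ν (Submodule.mem_iSup_of_mem hν hx_eigen)

theorem rank_range_spectralProjection_le {a b : ℝ} (hA : IsSelfAdjoint A) (hB : IsSelfAdjoint B)
    (hs : Disjoint (frontier s) (spectrum ℝ A)) (ht : Disjoint (frontier t) (spectrum ℝ B))
    (ha : 0 ≤ a) (hsa : s ∩ spectrum ℝ A ⊆ closedBall ν a)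
    (htb : ball ν b ∩ spectrum ℝ B ⊆ t) (hAB : ‖A - B‖ < b - a) :
    Module.rank ℂ (spectralProjection A s).range ≤
      Module.rank ℂ (spectralProjection B t).range := by
  refine rank_le_rank_range_of_norm_sub_lt (𝕜 := ℂ) (A := A - (ν : ℂ) • 1) (B := B - (ν : ℂ) • 1)
    (P := (spectralProjection B t : H →ₗ[ℂ] H)) (a := a) (b := b) ?_ (fun x hx ↦ ?_)
    (by rwa [sub_sub_sub_cancel_right])
  · rintro _ ⟨x, rfl⟩
    exact norm_apply_sub_smul_spectralProjection_le hA hs ha hsa x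
  · have hdisj : Disjoint (tᶜ ∩ spectrum ℝ B) (ball ν b) :=
      Set.disjoint_left.2 fun u hu hub ↦ hu.1 (htb ⟨hub, hu.2⟩)
    have hle := mul_norm_spectralProjection_apply_le hB (by rwa [frontier_compl])
      (by linarith [norm_nonneg (A - B)]) hdisj x
    rw [ContinuousLinearMap.coe_coe] at hx
    simpa [spectralProjection_compl hB ht, hx] using hle

theorem rank_range_spectralProjection_closedBall {μ ε : ℝ} (hA : IsSelfAdjoint A)
    (hB : IsSelfAdjoint B) (hgap : spectrum ℝ A ∩ ball μ (2 * ε) ⊆ {μ}) (hAB : ‖A - B‖ < ε) :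
    Module.rank ℂ (spectralProjection B (closedBall μ ε)).range =
      Module.rank ℂ (eigenspace (A : H →ₗ[ℂ] H) (μ : ℂ)) := by
  have hε : 0 < ε := (norm_nonneg _).trans_lt hAB
  have hfA := disjoint_frontier_closedBall_spectrum hA hgap (by rwa [sub_self, norm_zero])
  have hfB := disjoint_frontier_closedBall_spectrum hA hgap hAB
  have hμ : closedBall μ ε ∩ spectrum ℝ A ⊆ {μ} := fun t ⟨htμ, ht⟩ ↦
    hgap ⟨ht, closedBall_subset_ball (by linarith) htμ⟩
  rw [← range_spectralProjection_eq_eigenspace hA hfA (mem_closedBall_self hε.le) hμ]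
  apply le_antisymm
  · have hwindow : ball μ (2 * ε) ∩ spectrum ℝ A ⊆ closedBall μ ε := by
      rw [Set.inter_comm]
      exact hgap.trans (Set.singleton_subset_iff.2 (mem_closedBall_self hε.le))
    refine rank_range_spectralProjection_le hB hA hfB hfA hε.le Set.inter_subset_left hwindow ?_
    rw [norm_sub_rev]
    linarith
  · refine rank_range_spectralProjection_le hA hB hfA hfB le_rfl (by rwa [closedBall_zero])
      (Set.inter_subset_left.trans ball_subset_closedBall) ?_
    rwa [sub_zero]

end SpectralProjection

theorem stmt11_general {H : Type*} [NormedAddCommGroup H] [InnerProductSpace ℂ H]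
    [CompleteSpace H] {S T : H →L[ℂ] H} (hT : IsSelfAdjoint T) (hS : IsSelfAdjoint S) {μ ε : ℝ}
    (hfin : FiniteDimensional ℂ (eigenspace (T : H →ₗ[ℂ] H) (μ : ℂ)))
    (hsep : spectrum ℂ T ∩ (Complex.ofReal '' Set.Ioo (μ - 2 * ε) (μ + 2 * ε)) ⊆ {(μ : ℂ)})
    (hST : ‖S - T‖ < ε) :
    Module.rank ℂ ↥(⨆ (ν : ℝ) (_ : |ν - μ| ≤ ε), eigenspace (S : H →ₗ[ℂ] H) (ν : ℂ)) =
      Module.rank ℂ (eigenspace (T : H →ₗ[ℂ] H) (μ : ℂ)) := by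
  have hTS : ‖T - S‖ < ε := by rwa [norm_sub_rev]
  have hgap : spectrum ℝ T ∩ ball μ (2 * ε) ⊆ {μ} := fun t ⟨ht, htμ⟩ ↦ Complex.ofReal_injective <|
    hsep ⟨(spectrum.algebraMap_mem_iff ℂ).2 ht, t, Real.ball_eq_Ioo μ (2 * ε) ▸ htμ, rfl⟩
  have hrank := rank_range_spectralProjection_closedBall hT hS hgap hTS
  have hfinS : FiniteDimensional ℂ (spectralProjection S (closedBall μ ε)).range :=
    Module.rank_lt_aleph0_iff.1 (hrank.trans_lt (Module.rank_lt_aleph0 ..))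
  rwa [range_spectralProjection_eq_iSup_eigenspace hS
    (disjoint_frontier_closedBall_spectrum hT hgap hTS)] at hrank

/-- Let `T` and `(T_n)` be compact self-adjoint operators on a
complex Hilbert space with `‖T_n − T‖ → 0`.  Let `μ ≠ 0` be a real eigenvalue of `T`
whose eigenspace `ker (T − μI)` has finite dimension `m ≥ 1`, and let
`ε ∈ (0, |μ|/2)` be such that `spectrum T ∩ [μ − 2ε, μ + 2ε] = {μ}`.  Then for all
large `n` the sum of the eigenspaces of `T_n` for eigenvalues `ν` with `|ν − μ| ≤ ε`
has dimension exactly `m`: exactly `m` discrete eigenvalues, counted with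
multiplicity, converge to `μ`. -/
theorem stmt11
    {H : Type*} [NormedAddCommGroup H] [InnerProductSpace ℂ H] [CompleteSpace H]
    (T : H →L[ℂ] H) (Tn : ℕ → H →L[ℂ] H)
    (hTcomp : IsCompactOperator T) (hTncomp : ∀ n, IsCompactOperator (Tn n))
    (hT : IsSelfAdjoint T) (hTn : ∀ n, IsSelfAdjoint (Tn n))
    (hconv : Tendsto (fun n => ‖Tn n - T‖) atTop (nhds 0))
    (μ : ℝ) (hμ : μ ≠ 0) (m : ℕ) (hm : 1 ≤ m)
    (hfin : FiniteDimensional ℂ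
      (Module.End.eigenspace (T : H →ₗ[ℂ] H) (μ : ℂ)))
    (hdim : Module.finrank ℂ
      (Module.End.eigenspace (T : H →ₗ[ℂ] H) (μ : ℂ)) = m)
    (ε : ℝ) (hε0 : 0 < ε) (hε1 : ε < |μ| / 2)
    (hsep : spectrum ℂ T ∩ (Complex.ofReal '' Set.Icc (μ - 2 * ε) (μ + 2 * ε))
      = {(μ : ℂ)}) :
    ∃ N : ℕ, ∀ n ≥ N,
      Module.finrank ℂ
        ↥(⨆ (ν : ℝ) (_ : |ν - μ| ≤ ε),
          Module.End.eigenspace ((Tn n : H →ₗ[ℂ] H)) (ν : ℂ)) = m := by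
  obtain ⟨N, hN⟩ := eventually_atTop.1 (hconv.eventually_lt_const hε0)
  have hgap := (Set.inter_subset_inter_right (spectrum ℂ T)
    (Set.image_mono Set.Ioo_subset_Icc_self)).trans hsep.subset
  exact ⟨N, fun n hn ↦
    (congrArg Cardinal.toNat (stmt11_general hT (hTn n) hfin hgap (hN n hn))).trans hdim⟩
end
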